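/- arXiv:2305.13350 — 2 statements merged into one kernel-verified Lean document; each statement's English description precedes it below -/
import Mathlib

section
/- Let p > 0 and let m be an integer with m > p + 1. Let f : ℝ → ℂ be m times continuously differentiable with f^{(n)} ∈ L¹(ℝ) for every 0 ≤ n ≤ m, and write F = 𝓕f. Then for θ ∈ {e,o}: the integral defining f^θ_p(x) converges absolutely for every x, the function f^θ_p is continuous on ℝ, and φ^θ_p(·,ρ) converges to f^θ_p uniformly on ℝ as ρ → ∞, i.e. sup_{x∈ℝ} |φ^θ_p(x,ρ) − f^θ_p(x)| → 0 as ρ → ∞. Moreover f^θ_p is k times continuously differentiable for every integer k with 0 ≤ k < m − p − 1. -/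
open MeasureTheory Real

/-- The even frequency-domain multiplier `(iω)^p + (-iω)^p` (principal branch;
`0^p = 0` for `p > 0`). -/
noncomputable def kerE (p ω : ℝ) : ℂ :=
  (Complex.I * ω) ^ (p : ℂ) + (-(Complex.I * ω)) ^ (p : ℂ)

/-- The odd frequency-domain multiplier `(iω)^p - (-iω)^p`. -/
noncomputable def kerO (p ω : ℝ) : ℂ :=
  (Complex.I * ω) ^ (p : ℂ) - (-(Complex.I * ω)) ^ (p : ℂ)

/-- `φ^e_p(x,ρ) = (1/2π) ∫ F(ω)((iω)^p + (-iω)^p) e^{-ω²/(2ρ²)} e^{iωx} dω`. -/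
noncomputable def phiE (F : ℝ → ℂ) (p x ρ : ℝ) : ℂ :=
  (1 / (2 * (Real.pi : ℂ))) *
    ∫ ω : ℝ, F ω * kerE p ω * ((Real.exp (-ω ^ 2 / (2 * ρ ^ 2)) : ℝ) : ℂ) *
      Complex.exp (Complex.I * ω * x)

/-- `φ^o_p(x,ρ) = (1/2π) ∫ F(ω)((iω)^p - (-iω)^p) e^{-ω²/(2ρ²)} e^{iωx} dω`. -/
noncomputable def phiO (F : ℝ → ℂ) (p x ρ : ℝ) : ℂ :=
  (1 / (2 * (Real.pi : ℂ))) *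
    ∫ ω : ℝ, F ω * kerO p ω * ((Real.exp (-ω ^ 2 / (2 * ρ ^ 2)) : ℝ) : ℂ) *
      Complex.exp (Complex.I * ω * x)

/-- `f^e_p(x) = (1/2π) ∫ F(ω)((iω)^p + (-iω)^p) e^{iωx} dω`. -/
noncomputable def limE (F : ℝ → ℂ) (p x : ℝ) : ℂ :=
  (1 / (2 * (Real.pi : ℂ))) * ∫ ω : ℝ, F ω * kerE p ω * Complex.exp (Complex.I * ω * x)

/-- `f^o_p(x) = (1/2π) ∫ F(ω)((iω)^p - (-iω)^p) e^{iωx} dω`. -/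
noncomputable def limO (F : ℝ → ℂ) (p x : ℝ) : ℂ :=
  (1 / (2 * (Real.pi : ℂ))) * ∫ ω : ℝ, F ω * kerO p ω * Complex.exp (Complex.I * ω * x)

/-!
Integrating by parts `m` times gives `F(ω) = O((1 + |ω|)^(-m))`, while both multipliers are
`O((1 + |ω|)^p)`. Hence `F` times a multiplier is `O((1 + |ω|)^(-(m - p)))`, which has integrable
moments of every order `k < m - p - 1`; the moments of order at most `k` give `k` continuous
derivatives of the inverse transform. The inverse transform is bounded from `L¹` to the sup norm,
so uniform convergence follows from the `L¹` convergence of the Gaussian cutoffs.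
-/

open Filter Topology Asymptotics Module
open scoped FourierTransform

section PolynomialDecay

lemma isBigO_top_norm_rpow_one_add_norm_rpow {V : Type*} [SeminormedAddGroup V] {p : ℝ}
    (hp : 0 ≤ p) : (fun v : V => ‖v‖ ^ p) =O[⊤] fun v => (1 + ‖v‖) ^ p := by
  refine isBigO_of_le _ fun v => ?_
  rw [Real.norm_of_nonneg (by positivity), Real.norm_of_nonneg (by positivity)]
  gcongr
  exact le_add_of_nonneg_left zero_le_one

lemma isBigO_top_mul_one_add_norm_rpow {V R : Type*} [SeminormedAddGroup V] [SeminormedRing R]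
    {g h : V → R} {a b : ℝ} (hg : g =O[⊤] fun v => (1 + ‖v‖) ^ a)
    (hh : h =O[⊤] fun v => (1 + ‖v‖) ^ b) :
    (fun v => g v * h v) =O[⊤] fun v => (1 + ‖v‖) ^ (a + b) := by
  refine (hg.mul hh).congr_right fun v => ?_
  rw [← Real.rpow_add (by positivity)]

variable {V E : Type*} [NormedAddCommGroup V] [NormedSpace ℝ V] [FiniteDimensional ℝ V]
  [MeasurableSpace V] [BorelSpace V] {μ : Measure V} [μ.IsAddHaarMeasure]
  [NormedAddCommGroup E] {g : V → E} {r : ℝ}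

lemma integrable_norm_pow_mul_norm_of_isBigO {k : ℕ} (hg_meas : AEStronglyMeasurable g μ)
    (hg : g =O[⊤] fun v => (1 + ‖v‖) ^ (-r)) (hk : finrank ℝ V + k < r) :
    Integrable (fun v => ‖v‖ ^ k * ‖g v‖) μ := by
  have hpow : (fun v : V => ‖v‖ ^ k) =O[⊤] fun v => (1 + ‖v‖) ^ (k : ℝ) := by
    simpa only [Real.rpow_natCast] using isBigO_top_norm_rpow_one_add_norm_rpow k.cast_nonneg
  have hmoment : (fun v => ‖v‖ ^ k * ‖g v‖) =O[⊤] fun v => (1 + ‖v‖) ^ (-(r - k)) := by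
    simpa only [neg_sub, ← sub_eq_add_neg] using isBigO_top_mul_one_add_norm_rpow hpow hg.norm_left
  have hmeas : AEStronglyMeasurable (fun v => ‖v‖ ^ k * ‖g v‖) μ :=
    (by fun_prop : Continuous fun v : V => ‖v‖ ^ k).aestronglyMeasurable.mul hg_meas.norm
  exact hmoment.integrable hmeas (integrable_one_add_norm (by linarith))

lemma integrable_of_isBigO_one_add_norm_rpow (hg_meas : AEStronglyMeasurable g μ)
    (hg : g =O[⊤] fun v => (1 + ‖v‖) ^ (-r)) (hr : finrank ℝ V < r) : Integrable g μ :=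
  hg.integrable hg_meas (integrable_one_add_norm hr)

end PolynomialDecay

section Cutoff

lemma tendsto_integral_norm_mul_sub_self {α ι R : Type*} [MeasurableSpace α] {μ : Measure α}
    [NormedRing R] {l : Filter ι} [l.IsCountablyGenerated] {H : α → R} {χ : ι → α → R} {C : ℝ}
    (hH : Integrable H μ) (hχ_meas : ∀ᶠ i in l, AEStronglyMeasurable (χ i) μ)
    (hχ_bdd : ∀ᶠ i in l, ∀ᵐ a ∂μ, ‖χ i a‖ ≤ C)
    (hχ_lim : ∀ᵐ a ∂μ, Tendsto (fun i => χ i a) l (𝓝 1)) :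
    Tendsto (fun i => ∫ a, ‖H a * χ i a - H a‖ ∂μ) l (𝓝 0) := by
  rw [← integral_zero α ℝ (μ := μ)]
  refine tendsto_integral_filter_of_dominated_convergence (fun a => ‖H a‖ * C + ‖H a‖)
    ?_ ?_ ((hH.norm.mul_const C).add hH.norm) ?_
  · filter_upwards [hχ_meas] with i hi
    exact ((hH.1.mul hi).sub hH.1).norm
  · filter_upwards [hχ_bdd] with i hi
    filter_upwards [hi] with a ha
    rw [norm_norm]
    calc ‖H a * χ i a - H a‖ ≤ ‖H a * χ i a‖ + ‖H a‖ := norm_sub_le _ _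
      _ ≤ ‖H a‖ * ‖χ i a‖ + ‖H a‖ := by gcongr; exact norm_mul_le _ _
      _ ≤ ‖H a‖ * C + ‖H a‖ := by gcongr
  · filter_upwards [hχ_lim] with a ha
    simpa using ((ha.const_mul (H a)).sub_const (H a)).norm

lemma norm_ofReal_exp_neg_sq_div_le_one (ρ ω : ℝ) :
    ‖((Real.exp (-ω ^ 2 / (2 * ρ ^ 2)) : ℝ) : ℂ)‖ ≤ 1 := by
  rw [Complex.norm_real, Real.norm_of_nonneg (Real.exp_pos _).le, Real.exp_le_one_iff, neg_div,
    neg_nonpos]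
  positivity

lemma tendsto_ofReal_exp_neg_sq_div_atTop (ω : ℝ) :
    Tendsto (fun ρ : ℝ => ((Real.exp (-ω ^ 2 / (2 * ρ ^ 2)) : ℝ) : ℂ)) atTop (𝓝 1) := by
  have hden : Tendsto (fun ρ : ℝ => 2 * ρ ^ 2) atTop atTop :=
    (tendsto_pow_atTop two_ne_zero).const_mul_atTop two_pos
  have hexp : Tendsto (fun ρ : ℝ => Real.exp (-ω ^ 2 / (2 * ρ ^ 2))) atTop (𝓝 1) := by
    simpa only [Real.exp_zero] using (hden.const_div_atTop (-ω ^ 2)).rexp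
  exact (Complex.continuous_ofReal.tendsto 1).comp hexp

end Cutoff

/-- The Fourier transform in the angular-frequency normalization `∫ f(x) e^{-iωx} dx`; Mathlib's
`𝓕` puts `2π` into the exponent instead. -/
noncomputable def angularFourier (f : ℝ → ℂ) (ω : ℝ) : ℂ :=
  ∫ x : ℝ, f x * Complex.exp (-(Complex.I * ω * x))

/-- The inverse of `angularFourier`, `(1/2π) ∫ H(ω) e^{iωx} dω`, of which `limE`, `limO`, `phiE` and
`phiO` are instances. -/
noncomputable def angularFourierInv (H : ℝ → ℂ) (x : ℝ) : ℂ :=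
  1 / (2 * (π : ℂ)) * ∫ ω : ℝ, H ω * Complex.exp (Complex.I * ω * x)

section AngularFourier

variable {f : ℝ → ℂ}

lemma angularFourier_eq_fourier (f : ℝ → ℂ) (ω : ℝ) :
    angularFourier f ω = 𝓕 f (ω / (2 * π)) := by
  rw [angularFourier, Real.fourier_real_eq_integral_exp_smul]
  refine integral_congr_ae (.of_forall fun x => ?_)
  have hπ : (π : ℂ) ≠ 0 := mod_cast Real.pi_ne_zero
  simp only [smul_eq_mul, mul_comm (f x)]
  congr 2
  push_cast
  field_simp

lemma contDiff_angularFourier {k : ℕ}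
    (hf : ∀ n ≤ k, Integrable fun x => ‖x‖ ^ n * ‖f x‖) : ContDiff ℝ k (angularFourier f) := by
  have h𝓕 : ContDiff ℝ (k : ℕ∞) (𝓕 f) :=
    Real.contDiff_fourier fun n hn => hf n (mod_cast hn)
  rw [funext (angularFourier_eq_fourier f)]
  exact h𝓕.comp (contDiff_id.div_const _)

lemma continuous_angularFourier (hf : Integrable f) : Continuous (angularFourier f) := by
  refine (contDiff_angularFourier (k := 0) fun n hn => ?_).continuous
  simpa [Nat.le_zero.mp hn] using hf.norm

lemma norm_angularFourier_le_integral_norm (f : ℝ → ℂ) (ω : ℝ) :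
    ‖angularFourier f ω‖ ≤ ∫ x, ‖f x‖ := by
  rw [angularFourier_eq_fourier]
  exact VectorFourier.norm_fourierIntegral_le_integral_norm 𝐞 volume (innerₗ ℝ) f _

lemma angularFourier_iteratedDeriv {m : ℕ} (hf : ContDiff ℝ m f)
    (hint : ∀ n ≤ m, Integrable (iteratedDeriv n f)) (ω : ℝ) :
    angularFourier (iteratedDeriv m f) ω = (Complex.I * ω) ^ m * angularFourier f ω := by
  have hπ : (π : ℂ) ≠ 0 := mod_cast Real.pi_ne_zero
  rw [angularFourier_eq_fourier, angularFourier_eq_fourier, Real.fourier_iteratedDeriv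
    (N := (m : ℕ∞)) hf (fun n hn => hint n (mod_cast hn)) le_rfl]
  simp only [smul_eq_mul]
  congr 2
  push_cast
  field_simp

lemma one_add_norm_pow_mul_norm_angularFourier_le {m : ℕ} (hf : ContDiff ℝ m f)
    (hint : ∀ n ≤ m, Integrable (iteratedDeriv n f)) (ω : ℝ) :
    (1 + ‖ω‖) ^ m * ‖angularFourier f ω‖ ≤
      2 ^ (m - 1) * ((∫ x, ‖f x‖) + ∫ x, ‖iteratedDeriv m f x‖) := by
  have hderiv : ‖ω‖ ^ m * ‖angularFourier f ω‖ ≤ ∫ x, ‖iteratedDeriv m f x‖ := by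
    simpa [angularFourier_iteratedDeriv hf hint] using
      norm_angularFourier_le_integral_norm (iteratedDeriv m f) ω
  calc (1 + ‖ω‖) ^ m * ‖angularFourier f ω‖
      ≤ 2 ^ (m - 1) * (1 ^ m + ‖ω‖ ^ m) * ‖angularFourier f ω‖ := by
        gcongr
        exact add_pow_le zero_le_one (norm_nonneg ω) m
    _ = 2 ^ (m - 1) * (‖angularFourier f ω‖ + ‖ω‖ ^ m * ‖angularFourier f ω‖) := by ring
    _ ≤ 2 ^ (m - 1) * ((∫ x, ‖f x‖) + ∫ x, ‖iteratedDeriv m f x‖) := by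
        gcongr
        exact norm_angularFourier_le_integral_norm f ω

lemma isBigO_top_angularFourier {m : ℕ} (hf : ContDiff ℝ m f)
    (hint : ∀ n ≤ m, Integrable (iteratedDeriv n f)) :
    angularFourier f =O[⊤] fun ω => (1 + ‖ω‖) ^ (-(m : ℝ)) := by
  refine isBigO_top.mpr
    ⟨2 ^ (m - 1) * ((∫ x, ‖f x‖) + ∫ x, ‖iteratedDeriv m f x‖), fun ω => ?_⟩
  rw [Real.norm_of_nonneg (by positivity), Real.rpow_neg (by positivity), Real.rpow_natCast,
    ← div_eq_mul_inv, le_div_iff₀' (by positivity)]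
  exact one_add_norm_pow_mul_norm_angularFourier_le hf hint ω

end AngularFourier

section AngularFourierInv

variable {H : ℝ → ℂ}

lemma angularFourierInv_eq_angularFourier_neg (H : ℝ → ℂ) (x : ℝ) :
    angularFourierInv H x = 1 / (2 * (π : ℂ)) * angularFourier H (-x) := by
  simp only [angularFourierInv, angularFourier, Complex.ofReal_neg, mul_neg, neg_mul, neg_neg,
    mul_right_comm Complex.I]

lemma contDiff_angularFourierInv {k : ℕ}
    (hH : ∀ n ≤ k, Integrable fun ω => ‖ω‖ ^ n * ‖H ω‖) : ContDiff ℝ k (angularFourierInv H) := by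
  rw [funext (angularFourierInv_eq_angularFourier_neg H)]
  exact contDiff_const.mul ((contDiff_angularFourier hH).comp contDiff_neg)

lemma continuous_angularFourierInv (hH : Integrable H) : Continuous (angularFourierInv H) := by
  rw [funext (angularFourierInv_eq_angularFourier_neg H)]
  exact continuous_const.mul ((continuous_angularFourier hH).comp continuous_neg)

lemma integrable_mul_exp_I_mul (hH : Integrable H) (x : ℝ) :
    Integrable fun ω : ℝ => H ω * Complex.exp (Complex.I * ω * x) := by
  refine hH.mul_bdd (c := 1) (by fun_prop) (.of_forall fun ω => ?_)
  simp [Complex.norm_exp]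

lemma angularFourierInv_sub {G : ℝ → ℂ} (hG : Integrable G) (hH : Integrable H) (x : ℝ) :
    angularFourierInv (fun ω => G ω - H ω) x = angularFourierInv G x - angularFourierInv H x := by
  simp only [angularFourierInv, sub_mul]
  rw [integral_sub (integrable_mul_exp_I_mul hG x) (integrable_mul_exp_I_mul hH x), mul_sub]

lemma norm_angularFourierInv_le_integral_norm (H : ℝ → ℂ) (x : ℝ) :
    ‖angularFourierInv H x‖ ≤ ‖1 / (2 * (π : ℂ))‖ * ∫ ω, ‖H ω‖ := by
  rw [angularFourierInv_eq_angularFourier_neg, norm_mul]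
  gcongr
  exact norm_angularFourier_le_integral_norm H _

lemma tendstoUniformly_angularFourierInv {ι : Type*} {l : Filter ι} {G : ι → ℝ → ℂ}
    (hG : ∀ᶠ i in l, Integrable (G i)) (hH : Integrable H)
    (hGH : Tendsto (fun i => ∫ ω, ‖G i ω - H ω‖) l (𝓝 0)) :
    TendstoUniformly (fun i => angularFourierInv (G i)) (angularFourierInv H) l := by
  have hbound : Tendsto (fun i => ‖1 / (2 * (π : ℂ))‖ * ∫ ω, ‖G i ω - H ω‖) l (𝓝 0) := by
    simpa only [mul_zero] using hGH.const_mul ‖1 / (2 * (π : ℂ))‖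
  refine Metric.tendstoUniformly_iff.mpr fun ε hε => ?_
  filter_upwards [hG, hbound.eventually_lt_const hε] with i hGi hi x
  rw [dist_comm, dist_eq_norm, ← angularFourierInv_sub hGi hH]
  exact (norm_angularFourierInv_le_integral_norm _ x).trans_lt hi

lemma tendstoUniformly_angularFourierInv_mul_gaussian (hH : Integrable H) :
    TendstoUniformly
      (fun ρ : ℝ => angularFourierInv fun ω =>
        H ω * ((Real.exp (-ω ^ 2 / (2 * ρ ^ 2)) : ℝ) : ℂ))
      (angularFourierInv H) atTop := by
  have hmeas (ρ : ℝ) : AEStronglyMeasurable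
      (fun ω : ℝ => ((Real.exp (-ω ^ 2 / (2 * ρ ^ 2)) : ℝ) : ℂ)) volume :=
    Continuous.aestronglyMeasurable (by fun_prop)
  have hbound (ρ : ℝ) : ∀ᵐ ω : ℝ, ‖((Real.exp (-ω ^ 2 / (2 * ρ ^ 2)) : ℝ) : ℂ)‖ ≤ 1 :=
    .of_forall (norm_ofReal_exp_neg_sq_div_le_one ρ)
  exact tendstoUniformly_angularFourierInv
    (.of_forall fun ρ => hH.mul_bdd (hmeas ρ) (hbound ρ)) hH
    (tendsto_integral_norm_mul_sub_self hH (.of_forall hmeas) (.of_forall hbound)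
      (.of_forall tendsto_ofReal_exp_neg_sq_div_atTop))

lemma contDiff_angularFourierInv_of_isBigO {k : ℕ} {r : ℝ}
    (hH_meas : AEStronglyMeasurable H volume) (hH : H =O[⊤] fun ω => (1 + ‖ω‖) ^ (-r))
    (hk : k + 1 < r) : ContDiff ℝ k (angularFourierInv H) := by
  refine contDiff_angularFourierInv fun n hn =>
    integrable_norm_pow_mul_norm_of_isBigO hH_meas hH ?_
  have hn' : (n : ℝ) ≤ k := mod_cast hn
  rw [finrank_self, Nat.cast_one]
  linarith

end AngularFourierInv

section Multipliers

lemma measurable_kerE (p : ℝ) : Measurable (kerE p) := by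
  unfold kerE; fun_prop

lemma measurable_kerO (p : ℝ) : Measurable (kerO p) := by
  unfold kerO; fun_prop

variable {p : ℝ}

lemma isBigO_top_cpow_of_norm_eq {V : Type*} [SeminormedAddGroup V] {z : V → ℂ} (hp : 0 ≤ p)
    (hz : ∀ v, ‖z v‖ = ‖v‖) : (fun v => z v ^ (p : ℂ)) =O[⊤] fun v => (1 + ‖v‖) ^ p :=
  .of_norm_left <| (isBigO_top_norm_rpow_one_add_norm_rpow hp).congr_left fun v => by
    rw [Complex.norm_cpow_real, hz]

lemma isBigO_top_kerE (hp : 0 ≤ p) : kerE p =O[⊤] fun ω => (1 + ‖ω‖) ^ p :=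
  (isBigO_top_cpow_of_norm_eq hp (by simp)).add (isBigO_top_cpow_of_norm_eq hp (by simp))

lemma isBigO_top_kerO (hp : 0 ≤ p) : kerO p =O[⊤] fun ω => (1 + ‖ω‖) ^ p :=
  (isBigO_top_cpow_of_norm_eq hp (by simp)).sub (isBigO_top_cpow_of_norm_eq hp (by simp))

end Multipliers

/-- For `p > 0` and `m > p + 1`, the integrals defining `f^θ_p` converge absolutely, `f^θ_p` is
continuous, `φ^θ_p(·,ρ)` converges uniformly on `ℝ` to `f^θ_p` as `ρ → ∞`, and `f^θ_p` is `k`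
times continuously differentiable for `0 ≤ k < m - p - 1` (θ = e, o). -/
theorem stmt_16 (p : ℝ) (hp : 0 < p) (m : ℕ) (hm : (m : ℝ) > p + 1)
    (f : ℝ → ℂ) (hf : ContDiff ℝ m f)
    (hint : ∀ n ≤ m, Integrable (iteratedDeriv n f))
    (F : ℝ → ℂ) (hF : ∀ ω : ℝ, F ω = ∫ x : ℝ, f x * Complex.exp (-(Complex.I * ω * x))) :
    (∀ x : ℝ, Integrable (fun ω : ℝ => F ω * kerE p ω * Complex.exp (Complex.I * ω * x))) ∧
    (∀ x : ℝ, Integrable (fun ω : ℝ => F ω * kerO p ω * Complex.exp (Complex.I * ω * x))) ∧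
    Continuous (fun x => limE F p x) ∧ Continuous (fun x => limO F p x) ∧
    TendstoUniformly (fun ρ x => phiE F p x ρ) (fun x => limE F p x) Filter.atTop ∧
    TendstoUniformly (fun ρ x => phiO F p x ρ) (fun x => limO F p x) Filter.atTop ∧
    (∀ k : ℕ, (k : ℝ) < (m : ℝ) - p - 1 →
      ContDiff ℝ k (fun x => limE F p x) ∧ ContDiff ℝ k (fun x => limO F p x)) := by
  obtain rfl : F = angularFourier f := funext hF
  have hF_meas : Measurable (angularFourier f) :=
    (continuous_angularFourier (by simpa using hint 0 m.zero_le)).measurable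
  have decay {K : ℝ → ℂ} (hK : K =O[⊤] fun ω => (1 + ‖ω‖) ^ p) :
      (fun ω => angularFourier f ω * K ω) =O[⊤] fun ω => (1 + ‖ω‖) ^ (-(m - p)) := by
    simpa only [neg_sub, neg_add_eq_sub] using
      isBigO_top_mul_one_add_norm_rpow (isBigO_top_angularFourier hf hint) hK
  have hr : (finrank ℝ ℝ : ℝ) < m - p := by rw [finrank_self, Nat.cast_one]; linarith
  have hE_meas := (hF_meas.mul (measurable_kerE p)).aestronglyMeasurable (μ := volume)
  have hO_meas := (hF_meas.mul (measurable_kerO p)).aestronglyMeasurable (μ := volume)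
  have hE := decay (isBigO_top_kerE hp.le)
  have hO := decay (isBigO_top_kerO hp.le)
  have hE_int := integrable_of_isBigO_one_add_norm_rpow hE_meas hE hr
  have hO_int := integrable_of_isBigO_one_add_norm_rpow hO_meas hO hr
  exact ⟨integrable_mul_exp_I_mul hE_int, integrable_mul_exp_I_mul hO_int,
    continuous_angularFourierInv hE_int, continuous_angularFourierInv hO_int,
    tendstoUniformly_angularFourierInv_mul_gaussian hE_int,
    tendstoUniformly_angularFourierInv_mul_gaussian hO_int,
    fun k hk => ⟨contDiff_angularFourierInv_of_isBigO hE_meas hE (by linarith),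
      contDiff_angularFourierInv_of_isBigO hO_meas hO (by linarith)⟩⟩
end

section
/- Let p > 0 and let m be an integer with m > p + 3. Let f : ℝ → ℂ be m times continuously differentiable with f^{(n)} ∈ L¹(ℝ) for every 0 ≤ n ≤ m. Then for θ ∈ {e,o}, the function Ψ^θ_p(x,σ) is twice continuously differentiable in x and continuously differentiable in σ on ℝ × (0,∞), and it satisfies the scale-space evolution equation σ · ∂²Ψ^θ_p/∂x²(x,σ) = ∂Ψ^θ_p/∂σ(x,σ) for every real x and every σ > 0. -/
open MeasureTheory Real

/-- `Ψ^e_p(x,σ) = (1/2π) ∫ F(ω)((iω)^p + (-iω)^p) e^{-ω²σ²/2} e^{iωx} dω`. -/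
noncomputable def PsiE (F : ℝ → ℂ) (p x σ : ℝ) : ℂ :=
  (1 / (2 * (Real.pi : ℂ))) *
    ∫ ω : ℝ, F ω * kerE p ω * ((Real.exp (-(ω ^ 2 * σ ^ 2) / 2) : ℝ) : ℂ) *
      Complex.exp (Complex.I * ω * x)

/-- `Ψ^o_p(x,σ) = (1/2π) ∫ F(ω)((iω)^p - (-iω)^p) e^{-ω²σ²/2} e^{iωx} dω`. -/
noncomputable def PsiO (F : ℝ → ℂ) (p x σ : ℝ) : ℂ :=
  (1 / (2 * (Real.pi : ℂ))) *
    ∫ ω : ℝ, F ω * kerO p ω * ((Real.exp (-(ω ^ 2 * σ ^ 2) / 2) : ℝ) : ℂ) *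
      Complex.exp (Complex.I * ω * x)

/-!
Put `g x σ ω = e^{-ω²σ²/2} e^{iωx}`. Pointwise, `∂g/∂x = iω g` and `∂g/∂σ = -σω² g = σ (iω)² g`,
so every `g · · ω` solves the evolution equation; `Ψ` is the superposition of these waves with
weight `G(ω) = F(ω) ((iω)^p ± (-iω)^p) / 2π`. All differentiations under the integral are justified
by the Gaussian factor alone: `F` is bounded because `f ∈ L¹`, hence `G(ω) = O(|ω|^p)`, and for
`p > -1` such a weight remains integrable against every Gaussian after multiplication by any power
of `ω`.
-/

section GaussianIntegrable

/-- The functions `G` that are integrable against every centred Gaussian: the class of spectra whose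
scale-space representation makes sense at every scale `σ > 0`. -/
def GaussianIntegrable (G : ℝ → ℂ) : Prop :=
  ∀ b : ℝ, 0 < b → Integrable fun ω : ℝ => (Real.exp (-b * ω ^ 2) : ℂ) * G ω

/-- If `G` is the spectrum of a function, then `iω G(ω)` is the spectrum of its derivative. -/
noncomputable def derivSpectrum (G : ℝ → ℂ) (ω : ℝ) : ℂ :=
  Complex.I * ω * G ω

lemma abs_le_mul_exp_mul_sq {c : ℝ} (hc : 0 < c) (x : ℝ) :
    |x| ≤ (1 + 1 / c) * Real.exp (c * x ^ 2) := by
  have abs_le_one_add_sq : |x| ≤ 1 + x ^ 2 := by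
    nlinarith [sq_abs x, sq_nonneg (|x| - 1), abs_nonneg x]
  have one_le_exp : 1 ≤ Real.exp (c * x ^ 2) := Real.one_le_exp (by positivity)
  have sq_le_exp : x ^ 2 ≤ 1 / c * Real.exp (c * x ^ 2) := by
    rw [one_div, ← div_eq_inv_mul, le_div_iff₀' hc]
    linarith [Real.add_one_le_exp (c * x ^ 2)]
  linarith

lemma integrable_abs_rpow_mul_exp_neg_mul_sq {b q : ℝ} (hb : 0 < b) (hq : -1 < q) :
    Integrable fun x : ℝ => |x| ^ q * Real.exp (-b * x ^ 2) := by
  have radial := (integrable_fun_norm_addHaar (volume : Measure ℝ)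
    (f := fun r => r ^ q * Real.exp (-b * r ^ 2))).2
    (by simpa using integrableOn_rpow_mul_exp_neg_mul_sq hb hq)
  simpa only [Real.norm_eq_abs, sq_abs] using radial

lemma gaussianIntegrable_of_norm_le_rpow {G : ℝ → ℂ} {q C : ℝ} (hq : -1 < q)
    (hGm : AEStronglyMeasurable G) (hG : ∀ ω, ‖G ω‖ ≤ C * |ω| ^ q) : GaussianIntegrable G := by
  intro b hb
  refine ((integrable_abs_rpow_mul_exp_neg_mul_sq hb hq).const_mul C).mono' (by fun_prop)
    (.of_forall fun ω => ?_)
  calc ‖(Real.exp (-b * ω ^ 2) : ℂ) * G ω‖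
      = ‖G ω‖ * Real.exp (-b * ω ^ 2) := by
        rw [norm_mul, Complex.norm_real, Real.norm_of_nonneg (Real.exp_pos _).le, mul_comm]
    _ ≤ C * |ω| ^ q * Real.exp (-b * ω ^ 2) := by gcongr; exact hG ω
    _ = C * (|ω| ^ q * Real.exp (-b * ω ^ 2)) := mul_assoc _ _ _

namespace GaussianIntegrable

variable {G : ℝ → ℂ}

lemma aestronglyMeasurable (hG : GaussianIntegrable G) : AEStronglyMeasurable G := by
  have undamped : AEStronglyMeasurable fun ω : ℝ =>
      (Real.exp (ω ^ 2) : ℂ) * ((Real.exp (-1 * ω ^ 2) : ℂ) * G ω) :=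
    AEStronglyMeasurable.mul (by fun_prop) (hG 1 one_pos).1
  refine undamped.congr (.of_forall fun ω => ?_)
  dsimp only
  rw [← mul_assoc, ← Complex.ofReal_mul, ← Real.exp_add]
  simp

lemma bdd_mul (hG : GaussianIntegrable G) {F : ℝ → ℂ} {C : ℝ} (hFm : AEStronglyMeasurable F)
    (hF : ∀ ω, ‖F ω‖ ≤ C) : GaussianIntegrable fun ω => F ω * G ω := fun b hb => by
  simpa only [mul_left_comm] using (hG b hb).bdd_mul hFm (.of_forall hF)

lemma integrable_exp_mul_norm (hG : GaussianIntegrable G) {b : ℝ} (hb : 0 < b) :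
    Integrable fun ω : ℝ => Real.exp (-b * ω ^ 2) * ‖G ω‖ := by
  simpa only [norm_mul, Complex.norm_real, Real.norm_of_nonneg (Real.exp_pos _).le]
    using (hG b hb).norm

-- Half of the Gaussian is spent on absorbing the factor `ω`.
protected lemma derivSpectrum (hG : GaussianIntegrable G) :
    GaussianIntegrable (derivSpectrum G) := by
  intro b hb
  have hGm := hG.aestronglyMeasurable
  have absorbed : ∀ ω : ℝ, |ω| * Real.exp (-b * ω ^ 2) ≤
      (1 + 1 / (b / 2)) * Real.exp (-(b / 2) * ω ^ 2) := fun ω => by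
    calc |ω| * Real.exp (-b * ω ^ 2)
        ≤ (1 + 1 / (b / 2)) * Real.exp (b / 2 * ω ^ 2) * Real.exp (-b * ω ^ 2) := by
          gcongr
          exact abs_le_mul_exp_mul_sq (half_pos hb) ω
      _ = (1 + 1 / (b / 2)) * Real.exp (-(b / 2) * ω ^ 2) := by
          rw [mul_assoc, ← Real.exp_add]
          ring_nf
  refine ((hG.integrable_exp_mul_norm (half_pos hb)).const_mul (1 + 1 / (b / 2))).mono'
    (by unfold derivSpectrum; fun_prop) (.of_forall fun ω => ?_)
  calc ‖(Real.exp (-b * ω ^ 2) : ℂ) * derivSpectrum G ω‖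
      = |ω| * Real.exp (-b * ω ^ 2) * ‖G ω‖ := by
        simp only [derivSpectrum, norm_mul, Complex.norm_real, Complex.norm_I, one_mul,
          Real.norm_eq_abs, Real.abs_exp]
        ring
    _ ≤ (1 + 1 / (b / 2)) * Real.exp (-(b / 2) * ω ^ 2) * ‖G ω‖ :=
        mul_le_mul_of_nonneg_right (absorbed ω) (norm_nonneg _)
    _ = _ := mul_assoc _ _ _

end GaussianIntegrable

end GaussianIntegrable

section GaussianWave

/-- The plane wave of frequency `ω`, damped by the Gaussian of scale `σ`:
`e^{-ω²σ²/2} e^{iωx}`. -/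
noncomputable def gaussianWave (x σ ω : ℝ) : ℂ :=
  (Real.exp (-(ω ^ 2 * σ ^ 2) / 2) : ℂ) * Complex.exp (Complex.I * ω * x)

@[fun_prop]
lemma continuous_gaussianWave (x σ : ℝ) : Continuous (gaussianWave x σ) := by
  unfold gaussianWave
  fun_prop

lemma norm_gaussianWave (x σ ω : ℝ) :
    ‖gaussianWave x σ ω‖ = Real.exp (-(σ ^ 2 / 2) * ω ^ 2) := by
  have phase : Complex.I * ω * x = Complex.I * (ω * x : ℝ) := by push_cast; ring
  rw [gaussianWave, norm_mul, phase, Complex.norm_exp_I_mul_ofReal, mul_one, Complex.norm_real,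
    Real.norm_of_nonneg (Real.exp_pos _).le]
  ring_nf

lemma norm_gaussianWave_anti {r s : ℝ} (hr : 0 ≤ r) (hrs : r ≤ s) (x ω : ℝ) :
    ‖gaussianWave x s ω‖ ≤ ‖gaussianWave x r ω‖ := by
  rw [norm_gaussianWave, norm_gaussianWave]
  gcongr

lemma hasDerivAt_gaussianWave_position (x σ ω : ℝ) :
    HasDerivAt (fun y => gaussianWave y σ ω) (Complex.I * ω * gaussianWave x σ ω) x := by
  have phase : HasDerivAt (fun y : ℝ => Complex.I * ω * (y : ℂ)) (Complex.I * ω) x := by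
    simpa using (Complex.ofRealCLM.hasDerivAt (x := x)).const_mul (Complex.I * (ω : ℂ))
  refine (phase.cexp.const_mul _).congr_deriv ?_
  rw [gaussianWave]
  ring

lemma hasDerivAt_gaussianWave_scale (x σ ω : ℝ) :
    HasDerivAt (fun s => gaussianWave x s ω)
      (σ * (Complex.I * ω * (Complex.I * ω * gaussianWave x σ ω))) σ := by
  have exponent : HasDerivAt (fun s : ℝ => -(ω ^ 2 * s ^ 2) / 2) (-(ω ^ 2 * σ)) σ :=
    ((((hasDerivAt_pow 2 σ).const_mul (ω ^ 2)).neg).div_const 2).congr_deriv (by norm_num; ring)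
  refine (exponent.exp.ofReal_comp.mul_const _).congr_deriv ?_
  rw [gaussianWave]
  push_cast
  linear_combination (-(σ : ℂ) * (ω : ℂ) ^ 2 * Complex.exp (-(ω ^ 2 * σ ^ 2) / 2) *
    Complex.exp (Complex.I * ω * x)) * Complex.I_sq

end GaussianWave

section ScaleSpace

/-- The scale-space representation of the function with spectrum `G`: the inverse Fourier transform
`(1/2π) ∫ G(ω) e^{-ω²σ²/2} e^{iωx} dω` of `G` damped by the Gaussian of scale `σ`. -/
noncomputable def scaleSpace (G : ℝ → ℂ) (x σ : ℝ) : ℂ :=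
  (1 / (2 * (Real.pi : ℂ))) * ∫ ω : ℝ, G ω * gaussianWave x σ ω

variable {G : ℝ → ℂ}

namespace GaussianIntegrable

lemma aestronglyMeasurable_mul_gaussianWave (hG : GaussianIntegrable G) (x σ : ℝ) :
    AEStronglyMeasurable fun ω => G ω * gaussianWave x σ ω :=
  hG.aestronglyMeasurable.mul (by fun_prop)

lemma integrable_mul_gaussianWave (hG : GaussianIntegrable G) (x : ℝ) {σ : ℝ} (hσ : 0 < σ) :
    Integrable fun ω => G ω * gaussianWave x σ ω := by
  refine (hG.integrable_exp_mul_norm (b := σ ^ 2 / 2) (by positivity)).mono'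
    (hG.aestronglyMeasurable_mul_gaussianWave x σ) (.of_forall fun ω => ?_)
  rw [norm_mul, norm_gaussianWave, mul_comm]

lemma hasDerivAt_scaleSpace_position (hG : GaussianIntegrable G) (x : ℝ) {σ : ℝ} (hσ : 0 < σ) :
    HasDerivAt (fun y => scaleSpace G y σ) (scaleSpace (derivSpectrum G) x σ) x := by
  have hdG := hG.derivSpectrum
  refine (hasDerivAt_integral_of_dominated_loc_of_deriv_le Filter.univ_mem
    (F' := fun y ω => derivSpectrum G ω * gaussianWave y σ ω)
    (bound := fun ω => ‖derivSpectrum G ω * gaussianWave x σ ω‖)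
    (.of_forall fun y => hG.aestronglyMeasurable_mul_gaussianWave y σ)
    (hG.integrable_mul_gaussianWave x hσ)
    (hdG.aestronglyMeasurable_mul_gaussianWave x σ)
    (.of_forall fun ω y _ => ?_)
    (hdG.integrable_mul_gaussianWave x hσ).norm
    (.of_forall fun ω y _ => ?_)).2.const_mul _
  · simp only [norm_mul, norm_gaussianWave, le_refl]
  · refine ((hasDerivAt_gaussianWave_position y σ ω).const_mul (G ω)).congr_deriv ?_
    rw [derivSpectrum]
    ring

lemma hasDerivAt_scaleSpace_scale (hG : GaussianIntegrable G) (x : ℝ) {σ : ℝ} (hσ : 0 < σ) :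
    HasDerivAt (fun s => scaleSpace G x s)
      (σ * scaleSpace (derivSpectrum (derivSpectrum G)) x σ) σ := by
  set ddG := derivSpectrum (derivSpectrum G) with hddG_def
  have hddG : GaussianIntegrable ddG := hG.derivSpectrum.derivSpectrum
  have h := (hasDerivAt_integral_of_dominated_loc_of_deriv_le
    (Ioo_mem_nhds (half_lt_self hσ) (lt_two_mul_self hσ))
    (F' := fun s ω => (s : ℂ) * (ddG ω * gaussianWave x s ω))
    (bound := fun ω => 2 * σ * ‖ddG ω * gaussianWave x (σ / 2) ω‖)
    (.of_forall fun s => hG.aestronglyMeasurable_mul_gaussianWave x s)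
    (hG.integrable_mul_gaussianWave x hσ)
    ((hddG.aestronglyMeasurable_mul_gaussianWave x σ).const_mul _)
    (.of_forall fun ω s hs => ?_)
    ((hddG.integrable_mul_gaussianWave x (half_pos hσ)).norm.const_mul _)
    (.of_forall fun ω s _ => ?_)).2.const_mul (1 / (2 * (Real.pi : ℂ)))
  · refine h.congr_deriv ?_
    rw [integral_const_mul, scaleSpace, mul_left_comm]
  · have hs_pos : 0 < s := (half_pos hσ).trans hs.1
    rw [norm_mul, norm_mul, norm_mul, Complex.norm_real, Real.norm_of_nonneg hs_pos.le]
    gcongr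
    · exact hs.2.le
    · exact norm_gaussianWave_anti (half_pos hσ).le hs.1.le x ω
  · refine ((hasDerivAt_gaussianWave_scale x s ω).const_mul (G ω)).congr_deriv ?_
    simp only [hddG_def, derivSpectrum]
    ring

lemma deriv_scaleSpace_position (hG : GaussianIntegrable G) {σ : ℝ} (hσ : 0 < σ) :
    deriv (fun y => scaleSpace G y σ) = fun x => scaleSpace (derivSpectrum G) x σ :=
  funext fun x => (hG.hasDerivAt_scaleSpace_position x hσ).deriv

lemma contDiff_scaleSpace_position (hG : GaussianIntegrable G) {σ : ℝ} (hσ : 0 < σ) (n : ℕ) :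
    ContDiff ℝ n fun x => scaleSpace G x σ := by
  induction n generalizing G with
  | zero =>
    exact contDiff_zero.2 <| continuous_iff_continuousAt.2 fun x =>
      (hG.hasDerivAt_scaleSpace_position x hσ).continuousAt
  | succ n ih =>
    rw [Nat.cast_succ, contDiff_succ_iff_deriv]
    refine ⟨fun x => (hG.hasDerivAt_scaleSpace_position x hσ).differentiableAt, by simp, ?_⟩
    rw [hG.deriv_scaleSpace_position hσ]
    exact ih hG.derivSpectrum

lemma contDiffOn_scaleSpace_scale (hG : GaussianIntegrable G) (x : ℝ) (n : ℕ) :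
    ContDiffOn ℝ n (fun σ => scaleSpace G x σ) (Set.Ioi 0) := by
  induction n generalizing G with
  | zero =>
    exact contDiffOn_zero.2 fun σ hσ =>
      (hG.hasDerivAt_scaleSpace_scale x hσ).continuousAt.continuousWithinAt
  | succ n ih =>
    rw [Nat.cast_succ, contDiffOn_succ_iff_deriv_of_isOpen isOpen_Ioi]
    refine ⟨fun σ hσ =>
      (hG.hasDerivAt_scaleSpace_scale x hσ).differentiableAt.differentiableWithinAt,
      by simp, ?_⟩
    exact (Complex.ofRealCLM.contDiff.contDiffOn.mul (ih hG.derivSpectrum.derivSpectrum)).congr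
      fun σ hσ => (hG.hasDerivAt_scaleSpace_scale x hσ).deriv

theorem scaleSpace_evolution (hG : GaussianIntegrable G) (x : ℝ) {σ : ℝ} (hσ : 0 < σ) :
    (σ : ℂ) * deriv (deriv fun y => scaleSpace G y σ) x = deriv (fun s => scaleSpace G x s) σ := by
  rw [hG.deriv_scaleSpace_position hσ, hG.derivSpectrum.deriv_scaleSpace_position hσ,
    (hG.hasDerivAt_scaleSpace_scale x hσ).deriv]

end GaussianIntegrable

end ScaleSpace

section Multipliers

lemma norm_I_mul_cpow (p ω : ℝ) : ‖(Complex.I * ω) ^ (p : ℂ)‖ = |ω| ^ p := by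
  simp [Complex.norm_cpow_real]

lemma norm_neg_I_mul_cpow (p ω : ℝ) : ‖(-(Complex.I * ω)) ^ (p : ℂ)‖ = |ω| ^ p := by
  simp [Complex.norm_cpow_real]

lemma gaussianIntegrable_kerE {p : ℝ} (hp : -1 < p) : GaussianIntegrable (kerE p) := by
  refine gaussianIntegrable_of_norm_le_rpow (C := 2) hp
    (Measurable.aestronglyMeasurable (by unfold kerE; fun_prop)) fun ω => ?_
  refine (norm_add_le _ _).trans_eq ?_
  rw [norm_I_mul_cpow, norm_neg_I_mul_cpow, two_mul]

lemma gaussianIntegrable_kerO {p : ℝ} (hp : -1 < p) : GaussianIntegrable (kerO p) := by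
  refine gaussianIntegrable_of_norm_le_rpow (C := 2) hp
    (Measurable.aestronglyMeasurable (by unfold kerO; fun_prop)) fun ω => ?_
  refine (norm_sub_le _ _).trans_eq ?_
  rw [norm_I_mul_cpow, norm_neg_I_mul_cpow, two_mul]

lemma PsiE_eq_scaleSpace (F : ℝ → ℂ) (p : ℝ) :
    PsiE F p = scaleSpace fun ω => F ω * kerE p ω := by
  ext x σ
  simp only [PsiE, scaleSpace, gaussianWave, mul_assoc]

lemma PsiO_eq_scaleSpace (F : ℝ → ℂ) (p : ℝ) :
    PsiO F p = scaleSpace fun ω => F ω * kerO p ω := by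
  ext x σ
  simp only [PsiO, scaleSpace, gaussianWave, mul_assoc]

end Multipliers

section FourierTransform

lemma integral_mul_cexp_eq_fourierIntegral (f : ℝ → ℂ) (ω : ℝ) :
    ∫ x : ℝ, f x * Complex.exp (-(Complex.I * ω * x)) =
      VectorFourier.fourierIntegral Real.probChar volume (LinearMap.mul ℝ ℝ) f ω := by
  rw [VectorFourier.fourierIntegral_probChar]
  congr with x
  rw [smul_eq_mul, mul_comm, LinearMap.mul_apply']
  push_cast
  ring_nf

lemma continuous_integral_mul_cexp {f : ℝ → ℂ} (hf : Integrable f) :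
    Continuous fun ω : ℝ => ∫ x : ℝ, f x * Complex.exp (-(Complex.I * ω * x)) := by
  simp only [integral_mul_cexp_eq_fourierIntegral]
  exact VectorFourier.fourierIntegral_continuous Real.continuous_probChar
    (by simpa only [LinearMap.mul_apply'] using continuous_mul) hf

lemma norm_integral_mul_cexp_le (f : ℝ → ℂ) (ω : ℝ) :
    ‖∫ x : ℝ, f x * Complex.exp (-(Complex.I * ω * x))‖ ≤ ∫ x, ‖f x‖ := by
  rw [integral_mul_cexp_eq_fourierIntegral]
  exact VectorFourier.norm_fourierIntegral_le_integral_norm _ _ _ _ _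

end FourierTransform

theorem stmt_19_general (p : ℝ) (hp : -1 < p) (f : ℝ → ℂ) (hf : Integrable f)
    (F : ℝ → ℂ) (hF : ∀ ω : ℝ, F ω = ∫ x : ℝ, f x * Complex.exp (-(Complex.I * ω * x))) :
    (∀ σ : ℝ, 0 < σ → ∀ n : ℕ,
      ContDiff ℝ n (fun x => PsiE F p x σ) ∧ ContDiff ℝ n (fun x => PsiO F p x σ)) ∧
    (∀ x : ℝ, ∀ n : ℕ,
      ContDiffOn ℝ n (fun σ => PsiE F p x σ) (Set.Ioi 0) ∧
      ContDiffOn ℝ n (fun σ => PsiO F p x σ) (Set.Ioi 0)) ∧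
    (∀ x : ℝ, ∀ σ : ℝ, 0 < σ →
      (σ : ℂ) * deriv (deriv fun y => PsiE F p y σ) x = deriv (fun s => PsiE F p x s) σ ∧
      (σ : ℂ) * deriv (deriv fun y => PsiO F p y σ) x = deriv (fun s => PsiO F p x s) σ) := by
  have hF_meas : AEStronglyMeasurable F := by
    rw [funext hF]
    exact (continuous_integral_mul_cexp hf).aestronglyMeasurable
  have hF_bdd : ∀ ω, ‖F ω‖ ≤ ∫ x, ‖f x‖ := fun ω => hF ω ▸ norm_integral_mul_cexp_le f ω
  have hE := (gaussianIntegrable_kerE hp).bdd_mul hF_meas hF_bdd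
  have hO := (gaussianIntegrable_kerO hp).bdd_mul hF_meas hF_bdd
  rw [PsiE_eq_scaleSpace, PsiO_eq_scaleSpace]
  exact
    ⟨fun σ hσ n => ⟨hE.contDiff_scaleSpace_position hσ n, hO.contDiff_scaleSpace_position hσ n⟩,
      fun x n => ⟨hE.contDiffOn_scaleSpace_scale x n, hO.contDiffOn_scaleSpace_scale x n⟩,
      fun x σ hσ => ⟨hE.scaleSpace_evolution x hσ, hO.scaleSpace_evolution x hσ⟩⟩

/-- For `p > 0` and `m > p + 3`, the scale-space functions `Ψ^θ_p` (θ = e, o) are twice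
continuously differentiable in `x`, continuously differentiable in `σ` on `(0,∞)`, and satisfy
the evolution equation `σ Ψ^θ_{xx} = Ψ^θ_σ` for every `x` and `σ > 0`. -/
theorem stmt_19 (p : ℝ) (hp : 0 < p) (m : ℕ) (hm : (m : ℝ) > p + 3)
    (f : ℝ → ℂ) (hf : ContDiff ℝ m f)
    (hint : ∀ n ≤ m, Integrable (iteratedDeriv n f))
    (F : ℝ → ℂ) (hF : ∀ ω : ℝ, F ω = ∫ x : ℝ, f x * Complex.exp (-(Complex.I * ω * x))) :
    (∀ σ : ℝ, 0 < σ →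
      ContDiff ℝ 2 (fun x => PsiE F p x σ) ∧ ContDiff ℝ 2 (fun x => PsiO F p x σ)) ∧
    (∀ x : ℝ,
      ContDiffOn ℝ 1 (fun σ => PsiE F p x σ) (Set.Ioi 0) ∧
      ContDiffOn ℝ 1 (fun σ => PsiO F p x σ) (Set.Ioi 0)) ∧
    (∀ x : ℝ, ∀ σ : ℝ, 0 < σ →
      (σ : ℂ) * deriv (deriv fun y => PsiE F p y σ) x = deriv (fun s => PsiE F p x s) σ ∧
      (σ : ℂ) * deriv (deriv fun y => PsiO F p y σ) x = deriv (fun s => PsiO F p x s) σ) := by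
  obtain ⟨smooth_x, smooth_σ, evolution⟩ :=
    stmt_19_general p (by linarith) f (by simpa using hint 0 m.zero_le) F hF
  exact ⟨fun σ hσ => smooth_x σ hσ 2, fun x => smooth_σ x 1, evolution⟩
end
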